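/- Let 0 ≤ m < n be integers, let μ be a bounded signed Borel measure on [0,1], and let I ⊆ ℝ be a nonempty open interval bounded from above. Then the inequality ∫_{[0,1]} f((1−t)x + t y) dμ(t) ≥ 0 holds for all x, y ∈ I with x < y and for every f : I → ℝ such that (−1)^{n−k} f is k-increasing on I for every k ∈ {m, m+1, …, n}, if and only if the following three conditions hold: (i) μ_0(1) = … = μ_{m−1}(1) = 0; (ii) (−1)^{n−k} μ_k(1) ≥ 0 for all k ∈ {m,…,n−1}; (iii) μ_{n−1}^-(τ) ≤ 0 for all τ ∈ [0,1). -/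

import Mathlib

open MeasureTheory Set

/-- Integral of `f` over the set `A` with respect to the (automatically bounded) signed
Borel measure `μ`, defined via the Jordan decomposition. -/
noncomputable def sInt (μ : MeasureTheory.SignedMeasure ℝ) (A : Set ℝ) (f : ℝ → ℝ) : ℝ :=
  (∫ t in A, f t ∂μ.toJordanDecomposition.posPart) -
  (∫ t in A, f t ∂μ.toJordanDecomposition.negPart)

/-- `μ_k(τ) = ∫_{[0,1]} (t-τ)^k dμ(t)` (with the convention `0^0 = 1`). -/
noncomputable def muK (μ : MeasureTheory.SignedMeasure ℝ) (k : ℕ) (τ : ℝ) : ℝ :=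
  sInt μ (Icc 0 1) (fun t => (t - τ) ^ k)

/-- `μ_k^-(τ) = ∫_{[0,τ)} (t-τ)^k dμ(t)`. -/
noncomputable def muMinus (μ : MeasureTheory.SignedMeasure ℝ) (k : ℕ) (τ : ℝ) : ℝ :=
  sInt μ (Ico 0 τ) (fun t => (t - τ) ^ k)

/-- `μ_k^+(τ) = ∫_{(τ,1]} (t-τ)^k dμ(t)`. -/
noncomputable def muPlus (μ : MeasureTheory.SignedMeasure ℝ) (k : ℕ) (τ : ℝ) : ℝ :=
  sInt μ (Ioc τ 1) (fun t => (t - τ) ^ k)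

/-- The `n`th-order divided difference of `f` at the points `x 0, …, x n`. -/
noncomputable def divDiff (f : ℝ → ℝ) (n : ℕ) (x : Fin (n + 1) → ℝ) : ℝ :=
  ∑ j : Fin (n + 1), f (x j) / ∏ i ∈ Finset.univ.erase j, (x j - x i)

/-- `f` is `n`-increasing on `I`: all `n`th-order divided differences at pairwise
distinct points of `I` are nonnegative. -/
def nIncreasingOn (f : ℝ → ℝ) (I : Set ℝ) (n : ℕ) : Prop :=
  ∀ x : Fin (n + 1) → ℝ, Function.Injective x → (∀ j, x j ∈ I) → 0 ≤ divDiff f n x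

/-- `f` is `n`-decreasing on `I` if `-f` is `n`-increasing on `I`. -/
def nDecreasingOn (f : ℝ → ℝ) (I : Set ℝ) (n : ℕ) : Prop :=
  nIncreasingOn (fun u => -f u) I n

/-- `φ⁺_{p,n}(u) = ((u-p)_+)^n` for `n ≥ 1`, and `φ⁺_{p,0}` is the characteristic
function of `(p,∞)`. -/
noncomputable def phiPlus (p : ℝ) (n : ℕ) (u : ℝ) : ℝ :=
  if n = 0 then (if p < u then 1 else 0) else (max 0 (u - p)) ^ n

/-- `φ⁻_{p,n}(u) = ((u-p)_−)^n` for `n ≥ 1`, and `φ⁻_{p,0}` is the characteristic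
function of `(−∞,p)`. -/
noncomputable def phiMinus (p : ℝ) (n : ℕ) (u : ℝ) : ℝ :=
  if n = 0 then (if u < p then 1 else 0) else (max 0 (p - u)) ^ n

/- The set `J(p)` associated with an interval `I` and a point `p ∈ ℝ`:
`(−∞, (p − inf I)/(sup I − inf I))` if `p ≤ inf I` (interpreted as `(−∞,0)` when `I` is
unbounded above), `ℝ` if `p ∈ I`, and `(1 + (p − sup I)/(sup I − inf I), ∞)` if
`p ≥ sup I` (interpreted as `(1,∞)` when `I` is unbounded below). -/
open scoped Classical in
noncomputable def Jset (I : Set ℝ) (p : ℝ) : Set ℝ :=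
  if p ∈ I then Set.univ
  else if p ∈ lowerBounds I then
    (if BddAbove I then Set.Iio ((p - sInf I) / (sSup I - sInf I)) else Set.Iio 0)
  else
    (if BddBelow I then Set.Ioi (1 + (p - sSup I) / (sSup I - sInf I)) else Set.Ioi 1)


lemma divDiff_congr {f g : ℝ → ℝ} {k : ℕ} {x : Fin (k + 1) → ℝ} (h : ∀ j, f (x j) = g (x j)) :
    divDiff f k x = divDiff g k x := by
  unfold divDiff
  exact Finset.sum_congr rfl fun j _ => by rw [h j]

lemma divDiff_poly (P : Polynomial ℝ) (k : ℕ) (x : Fin (k + 1) → ℝ) (hx : Function.Injective x)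
    (hP : P.degree < ((k + 1 : ℕ) : WithBot ℕ)) :
    divDiff (fun u => P.eval u) k x = P.coeff k := by
  have := Lagrange.coeff_eq_sum (s := (Finset.univ : Finset (Fin (k + 1)))) (v := x)
    (hx.injOn) (P := P) (by simpa using hP)
  simp only [Finset.card_univ, Fintype.card_fin, Nat.add_sub_cancel] at this
  rw [this]; rfl

lemma divDiff_perm (f : ℝ → ℝ) (k : ℕ) (x : Fin (k + 1) → ℝ) (σ : Equiv.Perm (Fin (k + 1))) :
    divDiff f k (x ∘ σ) = divDiff f k x := by
  unfold divDiff
  rw [← Equiv.sum_comp σ (fun j => f (x j) / ∏ i ∈ Finset.univ.erase j, (x j - x i))]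
  refine Finset.sum_congr rfl fun j _ => ?_
  congr 1
  refine Finset.prod_bij (fun i _ => σ i) ?_ ?_ ?_ ?_
  · intro a ha; simpa using ha
  · intro a _ b _ h; simpa using h
  · intro b hb
    exact ⟨σ.symm b, by
      simp only [Finset.mem_erase, Finset.mem_univ, and_true] at hb ⊢
      intro h; exact hb (by rw [← h]; simp), by simp⟩
  · intro a _; rfl

lemma nInc_of_strictMono {f : ℝ → ℝ} {I : Set ℝ} {k : ℕ}
    (h : ∀ x : Fin (k + 1) → ℝ, StrictMono x → (∀ j, x j ∈ I) → 0 ≤ divDiff f k x) :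
    nIncreasingOn f I k := by
  intro x hx hI
  rw [← divDiff_perm f k x (Tuple.sort x)]
  apply h
  · exact (Tuple.monotone_sort x).strictMono_of_injective (hx.comp (Equiv.injective _))
  · intro j; exact hI _

lemma nInc_congr {f g : ℝ → ℝ} {I : Set ℝ} {k : ℕ} (hfg : ∀ u ∈ I, f u = g u)
    (h : nIncreasingOn f I k) : nIncreasingOn g I k := by
  intro x hx hI
  rw [divDiff_congr (fun j => (hfg _ (hI j)).symm)]
  exact h x hx hI

lemma divDiff_const_mul (c : ℝ) (f : ℝ → ℝ) (k : ℕ) (x : Fin (k + 1) → ℝ) :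
    divDiff (fun u => c * f u) k x = c * divDiff f k x := by
  unfold divDiff
  rw [Finset.mul_sum]
  exact Finset.sum_congr rfl fun j _ => by rw [mul_div_assoc]

lemma nInc_const_mul {c : ℝ} (hc : 0 ≤ c) {f : ℝ → ℝ} {I : Set ℝ} {k : ℕ}
    (h : nIncreasingOn f I k) : nIncreasingOn (fun u => c * f u) I k := by
  intro x hx hI
  rw [divDiff_const_mul]
  exact mul_nonneg hc (h x hx hI)

lemma divDiff_const (c : ℝ) (k : ℕ) (x : Fin (k + 2) → ℝ) (hx : Function.Injective x) :
    divDiff (fun _ => c) (k + 1) x = 0 := by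
  have := divDiff_poly (Polynomial.C c) (k + 1) x hx
    (lt_of_le_of_lt Polynomial.degree_C_le (by exact_mod_cast Nat.succ_pos _))
  simpa [Polynomial.coeff_C] using this

lemma nInc_of_deriv {F f : ℝ → ℝ} {I : Set ℝ} (hI : I.OrdConnected) {k : ℕ}
    (hd : ∀ u ∈ I, HasDerivAt F (f u) u) (h : nIncreasingOn f I k) :
    nIncreasingOn F I (k + 1) := by
  apply nInc_of_strictMono
  intro x hx hxI
  set P : Polynomial ℝ := Lagrange.interpolate Finset.univ x (fun j => F (x j)) with hPdef
  have hPdeg : P.degree < ((k + 1 + 1 : ℕ) : WithBot ℕ) := by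
    have := Lagrange.degree_interpolate_lt (s := Finset.univ) (v := x) (fun j => F (x j))
      hx.injective.injOn
    rw [Finset.card_univ, Fintype.card_fin] at this
    exact this
  have hPe : ∀ j, P.eval (x j) = F (x j) := fun j =>
    Lagrange.eval_interpolate_at_node (s := Finset.univ) (v := x) (fun j => F (x j))
      hx.injective.injOn (Finset.mem_univ j)
  have hroll : ∀ i : Fin (k + 1), ∃ ξ ∈ Ioo (x i.castSucc) (x i.succ),
      f ξ = (Polynomial.derivative P).eval ξ := by
    intro i
    have hlt : x i.castSucc < x i.succ := hx i.castSucc_lt_succ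
    have hsub : Icc (x i.castSucc) (x i.succ) ⊆ I := hI.out (hxI _) (hxI _)
    have hder : ∀ u ∈ Icc (x i.castSucc) (x i.succ), HasDerivAt (fun u => F u - P.eval u)
        (f u - (Polynomial.derivative P).eval u) u := fun u hu =>
      (hd u (hsub hu)).sub (P.hasDerivAt u)
    obtain ⟨ξ, hξ, h0⟩ := exists_hasDerivAt_eq_zero hlt
      (fun u hu => (hder u hu).continuousAt.continuousWithinAt)
      (by rw [hPe, hPe]; simp) (fun u hu => hder u (Ioo_subset_Icc_self hu))
    exact ⟨ξ, hξ, by linarith⟩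
  choose ξ hξ hξe using hroll
  have hξm : StrictMono ξ := by
    intro i j hij
    calc ξ i < x i.succ := (hξ i).2
      _ ≤ x j.castSucc := hx.monotone (by
          rw [Fin.le_def]; simp only [Fin.val_succ, Fin.val_castSucc]; exact hij)
      _ < ξ j := (hξ j).1
  have hξI : ∀ j, ξ j ∈ I := fun j =>
    hI.out (hxI _) (hxI _) (Ioo_subset_Icc_self (hξ j))
  have h1 := h ξ hξm.injective hξI
  rw [divDiff_congr (g := fun u => (Polynomial.derivative P).eval u) hξe, divDiff_poly _ _ _ hξm.injective, Polynomial.coeff_derivative] at h1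
  · rw [divDiff_congr (g := fun u => P.eval u) (fun j => (hPe j).symm), divDiff_poly _ _ _ hx.injective hPdeg]
    have : (0:ℝ) < (k:ℝ) + 1 := by positivity
    exact nonneg_of_mul_nonneg_left h1 this
  · by_cases hP0 : Polynomial.derivative P = 0
    · rw [hP0, Polynomial.degree_zero]; exact WithBot.bot_lt_coe _
    · have hP : P ≠ 0 := by rintro h; exact hP0 (by simp [h])
      have h2 := Polynomial.degree_derivative_lt hP
      rw [Polynomial.degree_eq_natDegree hP] at h2 hPdeg
      rw [Polynomial.degree_eq_natDegree hP0] at h2 ⊢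
      norm_cast at h2 hPdeg ⊢
      omega

lemma nInc_zero_iff {f : ℝ → ℝ} {I : Set ℝ} : nIncreasingOn f I 0 ↔ ∀ u ∈ I, 0 ≤ f u := by
  constructor
  · intro h u hu
    have := h (fun _ => u) (fun a b _ => Subsingleton.elim (α := Fin 1) a b) (fun _ => hu)
    have he : (Finset.univ.erase (0 : Fin 1)) = ∅ := by decide
    simpa [divDiff, he] using this
  · intro h x _ hI
    have he : (Finset.univ.erase (0 : Fin 1)) = ∅ := by decide
    simpa [divDiff, he] using h _ (hI 0)

lemma divDiff_one (f : ℝ → ℝ) (x : Fin 2 → ℝ) :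
    divDiff f 1 x = f (x 0) / (x 0 - x 1) + f (x 1) / (x 1 - x 0) := by
  have h0 : (Finset.univ.erase (0 : Fin 2)) = {1} := by decide
  have h1 : (Finset.univ.erase (1 : Fin 2)) = {0} := by decide
  simp [divDiff, Fin.sum_univ_two, h0, h1]

lemma divDiff_two (f : ℝ → ℝ) (x : Fin 3 → ℝ) :
    divDiff f 2 x = f (x 0) / ((x 0 - x 1) * (x 0 - x 2)) + f (x 1) / ((x 1 - x 0) * (x 1 - x 2))
      + f (x 2) / ((x 2 - x 0) * (x 2 - x 1)) := by
  have h0 : (Finset.univ.erase (0 : Fin 3)) = {1, 2} := by decide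
  have h1 : (Finset.univ.erase (1 : Fin 3)) = {0, 2} := by decide
  have h2 : (Finset.univ.erase (2 : Fin 3)) = {0, 1} := by decide
  simp [divDiff, Fin.sum_univ_three, h0, h1, h2]

lemma nInc_one_iff {f : ℝ → ℝ} {I : Set ℝ} : nIncreasingOn f I 1 ↔ MonotoneOn f I := by
  constructor
  · intro h a ha b hb hab
    rcases hab.eq_or_lt with rfl | hlt
    · exact le_rfl
    have := h ![a, b] (by
      intro i j hij; fin_cases i <;> fin_cases j <;> simp_all [hlt.ne, hlt.ne'])
      (by intro j; fin_cases j <;> simp [ha, hb])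
    rw [divDiff_one] at this
    simp only [Matrix.cons_val_zero, Matrix.cons_val_one] at this
    have e : f a / (a - b) + f b / (b - a) = (f b - f a) / (b - a) := by
      rw [← neg_sub b a, div_neg]; ring
    rw [e] at this
    have h2 := (le_div_iff₀ (sub_pos.2 hlt)).1 this
    linarith
  · intro h
    apply nInc_of_strictMono
    intro x hx hI
    have hlt : x 0 < x 1 := hx (by decide)
    rw [divDiff_one]
    have e : f (x 0) / (x 0 - x 1) + f (x 1) / (x 1 - x 0) = (f (x 1) - f (x 0)) / (x 1 - x 0) := by
      rw [← neg_sub (x 1) (x 0), div_neg]; ring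
    rw [e]
    exact div_nonneg (sub_nonneg.2 (h (hI _) (hI _) hlt.le)) (sub_pos.2 hlt).le

lemma dd2_eq (a b c fa fb fc : ℝ) (hab : a < b) (hbc : b < c) :
    fa / ((a - b) * (a - c)) + fb / ((b - a) * (b - c)) + fc / ((c - a) * (c - b)) =
      ((fc - fb) / (c - b) - (fb - fa) / (b - a)) / (c - a) := by
  have h1 : b - a ≠ 0 := (sub_pos.2 hab).ne'
  have h2 : c - b ≠ 0 := (sub_pos.2 hbc).ne'
  have h3 : c - a ≠ 0 := (sub_pos.2 (hab.trans hbc)).ne'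
  have h1' : a - b ≠ 0 := (sub_neg.2 hab).ne
  have h2' : b - c ≠ 0 := (sub_neg.2 hbc).ne
  have h3' : a - c ≠ 0 := (sub_neg.2 (hab.trans hbc)).ne
  rw [← neg_sub b a, ← neg_sub c a, ← neg_sub c b]
  field_simp
  ring

lemma nInc_two_iff {f : ℝ → ℝ} {I : Set ℝ} (hIc : I.OrdConnected) :
    nIncreasingOn f I 2 ↔ ConvexOn ℝ I f := by
  constructor
  · intro h
    apply convexOn_of_slope_mono_adjacent hIc.convex
    intro a b c ha hc hab hbc
    have hb : b ∈ I := hIc.out ha hc ⟨hab.le, hbc.le⟩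
    have := h ![a, b, c] (by
      intro i j hij
      have := hab.trans hbc
      fin_cases i <;> fin_cases j <;> simp_all [hab.ne, hab.ne', hbc.ne, hbc.ne', this.ne, this.ne'])
      (by intro j; fin_cases j <;> simp [ha, hb, hc])
    rw [divDiff_two] at this
    simp only [Matrix.cons_val] at this
    rw [dd2_eq a b c _ _ _ hab hbc] at this
    have h2 := (le_div_iff₀ (sub_pos.2 (hab.trans hbc))).1 this
    linarith
  · intro h
    apply nInc_of_strictMono
    intro x hx hI
    have h01 : x 0 < x 1 := hx (by decide)
    have h12 : x 1 < x 2 := hx (by decide)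
    rw [divDiff_two, dd2_eq _ _ _ _ _ _ h01 h12]
    exact div_nonneg (sub_nonneg.2 (h.slope_mono_adjacent (hI _) (hI _) h01 h12))
      (sub_pos.2 (h01.trans h12)).le

/-- Truncated power `((p-u)_+)^r`. -/
noncomputable def truncPow (p : ℝ) (r : ℕ) (u : ℝ) : ℝ := if u < p then (p - u) ^ r else 0

lemma truncPow_nonneg (p : ℝ) (r : ℕ) (u : ℝ) : 0 ≤ truncPow p r u := by
  unfold truncPow
  split_ifs with h
  · exact pow_nonneg (sub_pos.2 h).le _
  · exact le_rfl

lemma truncPow_anti (p : ℝ) (r : ℕ) : Antitone (truncPow p r) := by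
  intro u v huv
  by_cases hv : v < p
  · have hu : u < p := lt_of_le_of_lt huv hv
    simp only [truncPow, hu, hv, if_true]
    exact pow_le_pow_left₀ (by linarith) (by linarith) r
  · have : truncPow p r v = 0 := by simp [truncPow, hv]
    rw [this]
    exact truncPow_nonneg _ _ _

lemma truncPow_hasDerivAt (p : ℝ) (r : ℕ) (u : ℝ) :
    HasDerivAt (truncPow p (r + 2)) (-((r + 2 : ℕ) * truncPow p (r + 1) u)) u := by
  have hpoly : ∀ v, HasDerivAt (fun w : ℝ => (p - w) ^ (r + 2))
      (-((r + 2 : ℕ) * (p - v) ^ (r + 1))) v := by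
    intro v
    have h := (((hasDerivAt_id v).const_sub p).pow (r + 2))
    refine (h.congr_deriv ?_)
    simp
  rcases lt_trichotomy u p with h | h | h
  · have h1 := hpoly u
    have e : truncPow p (r + 1) u = (p - u) ^ (r + 1) := by simp [truncPow, h]
    rw [e]
    refine h1.congr_of_eventuallyEq ?_
    filter_upwards [Iio_mem_nhds h] with v hv
    have hv' : v < p := hv
    simp [truncPow, hv']
  · subst h
    have e : truncPow u (r + 1) u = 0 := by simp [truncPow]
    rw [e, mul_zero, neg_zero, ← hasDerivWithinAt_univ, ← Iic_union_Ici (a := u)]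
    apply HasDerivWithinAt.union
    · have h1 := (hpoly u).hasDerivWithinAt (s := Iic u)
      simp only [sub_self, ne_eq, Nat.add_eq_zero_iff, one_ne_zero, and_false, not_false_eq_true,
        zero_pow, mul_zero, neg_zero] at h1
      refine h1.congr ?_ ?_
      · intro v hv
        rcases (mem_Iic.1 hv).lt_or_eq with h | h
        · simp [truncPow, h]
        · simp [truncPow, h]
      · simp [truncPow]
    · refine (hasDerivWithinAt_const u (Ici u) (0:ℝ)).congr ?_ ?_
      · intro v hv
        have : ¬ v < u := not_lt.2 hv
        simp [truncPow, this]
      · simp [truncPow]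
  · have hu : ¬ u < p := not_lt.2 h.le
    have e : truncPow p (r + 1) u = 0 := by simp [truncPow, hu]
    rw [e, mul_zero, neg_zero]
    refine (hasDerivAt_const u (0:ℝ)).congr_of_eventuallyEq ?_
    filter_upwards [Ioi_mem_nhds h] with v hv
    have hv' : ¬ v < p := not_lt.2 (le_of_lt hv)
    simp [truncPow, hv']

lemma truncPow_nInc (p : ℝ) {I : Set ℝ} (hI : I.OrdConnected) (r k : ℕ) (hk : k ≤ r + 1) :
    nIncreasingOn (fun u => (-1 : ℝ) ^ k * truncPow p r u) I k := by
  have h0 : ∀ r, nIncreasingOn (fun u => (-1 : ℝ) ^ 0 * truncPow p r u) I 0 := by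
    intro r
    rw [nInc_zero_iff]
    intro u _
    simpa using truncPow_nonneg p r u
  have h1 : ∀ r, nIncreasingOn (fun u => (-1 : ℝ) ^ 1 * truncPow p r u) I 1 := by
    intro r
    rw [nInc_one_iff]
    intro u _ v _ huv
    have := truncPow_anti p r huv
    simpa using this
  have h2 : nIncreasingOn (fun u => (-1 : ℝ) ^ 2 * truncPow p 1 u) I 2 := by
    rw [nInc_two_iff hI]
    have e : (fun u => (-1 : ℝ) ^ 2 * truncPow p 1 u) = fun u => max (p - u) 0 := by
      ext u
      unfold truncPow
      split_ifs with h
      · rw [max_eq_left (by linarith)]; ring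
      · rw [max_eq_right (by linarith)]; ring
    rw [e]
    have hc : ConvexOn ℝ I (fun u : ℝ => p - u) := by
      refine ⟨hI.convex, ?_⟩
      intro x _ y _ a b _ _ hab
      simp only [smul_eq_mul]
      have : a * (p - x) + b * (p - y) = (a + b) * p - (a * x + b * y) := by ring
      rw [this, hab, one_mul]
    exact hc.sup (convexOn_const 0 hI.convex)
  induction r generalizing k with
  | zero =>
    interval_cases k
    · exact h0 0
    · exact h1 0
  | succ r ih =>
    rcases k with _ | k
    · exact h0 _
    rcases r with _ | r
    · rcases k with _ | k
      · exact h1 _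
      · obtain rfl : k = 0 := by omega
        exact h2
    · refine nInc_of_deriv hI (f := fun u => ((r + 2 : ℕ) : ℝ) * ((-1) ^ k * truncPow p (r + 1) u))
        ?_ (nInc_const_mul (Nat.cast_nonneg _) (ih k (by omega)))
      intro u _
      refine ((truncPow_hasDerivAt p r u).const_mul ((-1 : ℝ) ^ (k + 1))).congr_deriv ?_
      rw [pow_succ]; ring

lemma pow_nInc (s : ℝ) {I : Set ℝ} (hI : I.OrdConnected) (hs : ∀ u ∈ I, u ≤ s) (r k : ℕ) :
    nIncreasingOn (fun u => (-1 : ℝ) ^ k * (s - u) ^ r) I k := by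
  induction r generalizing k with
  | zero =>
    cases k with
    | zero => rw [nInc_zero_iff]; intro u _; simp
    | succ k =>
      intro x hx _
      simp only [pow_zero, mul_one]
      rw [divDiff_const _ _ _ hx]
  | succ r ih =>
    cases k with
    | zero =>
      rw [nInc_zero_iff]; intro u hu
      have := hs u hu
      simpa using pow_nonneg (sub_nonneg.2 this) (r + 1)
    | succ k =>
      refine nInc_of_deriv hI (f := fun u => ((r + 1 : ℕ) : ℝ) * ((-1) ^ k * (s - u) ^ r))
        ?_ (nInc_const_mul (Nat.cast_nonneg _) (ih k))
      intro u _
      have h := ((((hasDerivAt_id u).const_sub s).pow (r + 1)).const_mul ((-1 : ℝ) ^ (k + 1)))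
      refine h.congr_deriv ?_
      simp [pow_succ]; ring

lemma pow_nInc_zero (y : ℝ) {I : Set ℝ} (hI : I.OrdConnected) (r k : ℕ) (hrk : r < k) (c : ℝ) :
    nIncreasingOn (fun u => c * (u - y) ^ r) I k := by
  induction r generalizing k c with
  | zero =>
    obtain ⟨k, rfl⟩ : ∃ j, k = j + 1 := ⟨k - 1, by omega⟩
    intro x hx _
    simp only [pow_zero, mul_one]
    rw [divDiff_const _ _ _ hx]
  | succ r ih =>
    obtain ⟨k, rfl⟩ : ∃ j, k = j + 1 := ⟨k - 1, by omega⟩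
    refine nInc_of_deriv hI (f := fun u => (c * ((r + 1 : ℕ) : ℝ)) * (u - y) ^ r)
        ?_ (ih k (by omega) _)
    intro u _
    have h := ((((hasDerivAt_id u).sub_const y).pow (r + 1)).const_mul c)
    refine h.congr_deriv ?_
    simp; ring

lemma prod_erase_ite {k : ℕ} (j : Fin k) (h : Fin k → ℝ) :
    ∏ i ∈ Finset.univ.erase j, h i = ∏ i, if i = j then 1 else h i := by
  rw [← Finset.mul_prod_erase Finset.univ _ (Finset.mem_univ j)]
  simp only [if_true, one_mul]
  refine Finset.prod_congr rfl fun i hi => ?_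
  rw [if_neg (Finset.ne_of_mem_erase hi)]

lemma divDiff_slope (f : ℝ → ℝ) (a : ℝ) (k : ℕ) (x : Fin (k + 1) → ℝ)
    (hx : Function.Injective x) (ha : ∀ j, x j ≠ a) :
    divDiff (fun u => (f u - f a) / (u - a)) k x =
      divDiff f (k + 1) (Fin.cons a x : Fin (k + 2) → ℝ) := by
  have hinj : Function.Injective (Fin.cons a x : Fin (k + 2) → ℝ) := by
    rw [Fin.cons_injective_iff]
    exact ⟨fun ⟨j, hj⟩ => ha j hj, hx⟩
  have h1 : divDiff f (k + 1) (Fin.cons a x : Fin (k + 2) → ℝ) =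
      divDiff (fun u => f u - f a) (k + 1) (Fin.cons a x : Fin (k + 2) → ℝ) := by
    have h2 := divDiff_const (f a) k _ hinj
    have h3 : divDiff (fun u => f u - f a) (k + 1) (Fin.cons a x : Fin (k + 2) → ℝ) =
        divDiff f (k + 1) (Fin.cons a x : Fin (k + 2) → ℝ) -
        divDiff (fun _ => f a) (k + 1) (Fin.cons a x : Fin (k + 2) → ℝ) := by
      unfold divDiff
      rw [← Finset.sum_sub_distrib]
      exact Finset.sum_congr rfl fun j _ => sub_div _ _ _
    rw [h3, h2, sub_zero]
  rw [h1]
  unfold divDiff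
  rw [Fin.sum_univ_succ (n := k + 1)]
  simp only [Fin.cons_zero, sub_self, zero_div, zero_add, Fin.cons_succ]
  refine Finset.sum_congr rfl fun j _ => ?_
  rw [div_div]
  congr 1
  rw [prod_erase_ite, prod_erase_ite, Fin.prod_univ_succ (n := k + 1)]
  simp [(Fin.succ_ne_zero j).symm]

lemma nInc_continuousOn (k : ℕ) (f : ℝ → ℝ) (I : Set ℝ) (hIo : IsOpen I) (hI : I.OrdConnected)
    (h : nIncreasingOn f I (k + 2)) : ContinuousOn f I := by
  induction k generalizing f I with
  | zero => exact ((nInc_two_iff hI).1 h).continuousOn hIo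
  | succ k ih =>
    intro u hu
    obtain ⟨a, haI, hau⟩ : ∃ a ∈ I, a < u := by
      obtain ⟨ε, hε, hb⟩ := Metric.isOpen_iff.1 hIo u hu
      refine ⟨u - ε / 2, hb ?_, by linarith⟩
      rw [Metric.mem_ball, Real.dist_eq, abs_lt]; constructor <;> linarith
    have hg : nIncreasingOn (fun u => (f u - f a) / (u - a)) (I ∩ Ioi a) (k + 2) := by
      intro x hx hxI
      have hne : ∀ j, x j ≠ a := fun j => ne_of_gt (hxI j).2
      rw [divDiff_slope f a _ x hx hne]
      apply h
      · rw [Fin.cons_injective_iff]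
        exact ⟨fun ⟨j, hj⟩ => hne j hj, hx⟩
      · intro j
        refine Fin.cases ?_ ?_ j
        · simpa using haI
        · intro i; simpa using (hxI i).1
    have ho : IsOpen (I ∩ Ioi a) := hIo.inter isOpen_Ioi
    have hc := ih _ _ ho (hI.inter ordConnected_Ioi) hg
    have hca := (hc u ⟨hu, hau⟩).continuousAt (ho.mem_nhds ⟨hu, hau⟩)
    have h2 : ContinuousAt (fun v => (f v - f a) / (v - a) * (v - a) + f a) u :=
      (hca.mul (by fun_prop)).add continuousAt_const
    refine (h2.congr ?_).continuousWithinAt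
    filter_upwards [Ioi_mem_nhds hau] with v hv
    have : v - a ≠ 0 := (sub_pos.2 hv).ne'
    field_simp
    ring

/-- Polynomial in Bernstein form with coefficients `c`. -/
noncomputable def bern (N : ℕ) (c : ℕ → ℝ) : Polynomial ℝ :=
  ∑ i ∈ Finset.range (N + 1), Polynomial.C (c i) * bernsteinPolynomial ℝ N i

lemma bern_derivative (N : ℕ) (c : ℕ → ℝ) :
    Polynomial.derivative (bern (N + 1) c) =
      Polynomial.C ((N : ℝ) + 1) * bern N (fwdDiff 1 c) := by
  have h1 : Polynomial.derivative (bern (N + 1) c) = Polynomial.C ((N : ℝ) + 1) *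
      ((∑ i ∈ Finset.range (N + 1), Polynomial.C (c (i + 1)) * bernsteinPolynomial ℝ N i) -
      ((∑ i ∈ Finset.range (N + 1), Polynomial.C (c (i + 1)) * bernsteinPolynomial ℝ N (i + 1)) +
        Polynomial.C (c 0) * bernsteinPolynomial ℝ N 0)) := by
    unfold bern
    rw [Finset.sum_range_succ', Polynomial.derivative_add, Polynomial.derivative_sum,
      Polynomial.derivative_C_mul, bernsteinPolynomial.derivative_zero]
    simp only [Polynomial.derivative_C_mul, bernsteinPolynomial.derivative_succ,
      Nat.add_sub_cancel]
    have e : ∀ i, Polynomial.C (c (i + 1)) * (((N + 1 : ℕ) : Polynomial ℝ) *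
        (bernsteinPolynomial ℝ N i - bernsteinPolynomial ℝ N (i + 1))) =
        Polynomial.C ((N : ℝ) + 1) * (Polynomial.C (c (i + 1)) * bernsteinPolynomial ℝ N i) -
        Polynomial.C ((N : ℝ) + 1) *
          (Polynomial.C (c (i + 1)) * bernsteinPolynomial ℝ N (i + 1)) := by
      intro i
      simp; ring
    simp only [e]
    rw [Finset.sum_sub_distrib, ← Finset.mul_sum, ← Finset.mul_sum]
    simp; ring
  rw [h1]
  congr 1
  rw [← Finset.sum_range_succ' (fun i => Polynomial.C (c i) * bernsteinPolynomial ℝ N i),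
    Finset.sum_range_succ _ (N + 1), bernsteinPolynomial.eq_zero_of_lt ℝ (Nat.lt_succ_self N), mul_zero,
    add_zero, ← Finset.sum_sub_distrib]
  unfold bern
  refine Finset.sum_congr rfl fun i _ => ?_
  simp [fwdDiff, sub_mul]

lemma bern_deriv_nonneg (k N : ℕ) (c : ℕ → ℝ)
    (hc : ∀ i, i + k ≤ N → 0 ≤ (fwdDiff 1)^[k] c i) (t : ℝ) (ht : t ∈ Icc (0:ℝ) 1) :
    0 ≤ ((Polynomial.derivative)^[k] (bern N c)).eval t := by
  induction k generalizing N c with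
  | zero =>
    simp only [Function.iterate_zero, id_eq, bern, Polynomial.eval_finsetSum]
    refine Finset.sum_nonneg fun i hi => ?_
    have h1 := hc i (by have := Finset.mem_range.1 hi; omega)
    simp only [Function.iterate_zero, id_eq] at h1
    have h2 : 0 ≤ 1 - t := sub_nonneg.2 ht.2
    have h3 : 0 ≤ t := ht.1
    simp only [Polynomial.eval_mul, Polynomial.eval_C, bernsteinPolynomial, Polynomial.eval_pow,
      Polynomial.eval_natCast, Polynomial.eval_X, Polynomial.eval_sub, Polynomial.eval_one]
    positivity
  | succ k ih =>
    rw [Function.iterate_succ_apply]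
    cases N with
    | zero =>
      have : Polynomial.derivative (bern 0 c) = 0 := by
        simp [bern, bernsteinPolynomial]
      rw [this]; simp
    | succ N =>
      rw [bern_derivative, Polynomial.iterate_derivative_C_mul, Polynomial.eval_C_mul]
      refine mul_nonneg (by positivity) (ih N _ ?_)
      intro i hi
      have := hc i (by omega)
      rwa [Function.iterate_succ_apply] at this

lemma prod_sub_range (n : ℕ) : ∏ l ∈ Finset.range n, ((n : ℝ) - l) = (n.factorial : ℝ) := by
  induction n with
  | zero => simp
  | succ n ih =>
    rw [Finset.prod_range_succ', Nat.factorial_succ]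
    push_cast
    simp only [add_sub_add_right_eq_sub, ih]
    simp; ring

lemma prod_nodes (k j : ℕ) (hj : j ≤ k) :
    ∏ l ∈ Finset.range (k + 1), (if l = j then (1:ℝ) else (j : ℝ) - l) =
      (-1) ^ (k - j) * (j.factorial : ℝ) * ((k - j).factorial : ℝ) := by
  induction k with
  | zero =>
    obtain rfl : j = 0 := by omega
    simp
  | succ k ih =>
    rw [Finset.prod_range_succ]
    rcases Nat.lt_or_ge k j with h | h
    · obtain rfl : j = k + 1 := by omega
      simp only [if_true, mul_one, Nat.sub_self, pow_zero, one_mul, Nat.factorial_zero,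
        Nat.cast_one]
      rw [← prod_sub_range]
      refine Finset.prod_congr rfl fun l hl => ?_
      rw [if_neg (by have := Finset.mem_range.1 hl; omega)]
    · rw [ih h, if_neg (by omega)]
      obtain ⟨d, rfl⟩ := Nat.exists_eq_add_of_le h
      rw [show j + d - j = d by omega, show j + d + 1 - j = d + 1 by omega, Nat.factorial_succ]
      push_cast
      ring

lemma fwdDiff_eq_divDiff (f : ℝ → ℝ) (x h : ℝ) (hh : h ≠ 0) (k i : ℕ) :
    (fwdDiff 1)^[k] (fun i : ℕ => f (x + i * h)) i =
      (k.factorial : ℝ) * h ^ k * divDiff f k (fun j => x + ((i + j : ℕ) : ℝ) * h) := by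
  rw [fwdDiff_iter_eq_sum_shift]
  unfold divDiff
  rw [Finset.sum_range, Finset.mul_sum]
  refine Finset.sum_congr rfl fun j _ => ?_
  have hj : (j : ℕ) ≤ k := by omega
  have hp : ∏ l ∈ Finset.univ.erase j, (x + ((i + j : ℕ) : ℝ) * h - (x + ((i + l : ℕ) : ℝ) * h)) =
      h ^ k * ((-1) ^ (k - (j:ℕ)) * ((j:ℕ).factorial : ℝ) * ((k - (j:ℕ)).factorial : ℝ)) := by
    have e : ∀ l : Fin (k + 1), (x + ((i + j : ℕ) : ℝ) * h - (x + ((i + l : ℕ) : ℝ) * h)) =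
        h * (((j:ℕ) : ℝ) - ((l:ℕ) : ℝ)) := by intro l; push_cast; ring
    simp only [e]
    rw [Finset.prod_mul_distrib, Finset.prod_const, Finset.card_erase_of_mem (Finset.mem_univ _)]
    simp only [Finset.card_univ, Fintype.card_fin, Nat.add_sub_cancel]
    congr 1
    rw [← prod_nodes k j hj, prod_erase_ite, Finset.prod_range]
    refine Finset.prod_congr rfl fun l _ => ?_
    simp [Fin.ext_iff]
  rw [hp]
  have hC : (k.choose j : ℝ) * ((j:ℕ).factorial : ℝ) * ((k - (j:ℕ)).factorial : ℝ) =
      (k.factorial : ℝ) := by exact_mod_cast Nat.choose_mul_factorial_mul_factorial hj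
  have h1 : ((j:ℕ).factorial : ℝ) ≠ 0 := by positivity
  have h2 : ((k - (j:ℕ)).factorial : ℝ) ≠ 0 := by positivity
  have h3 : ((-1 : ℝ) ^ (k - (j:ℕ))) * (-1) ^ (k - (j:ℕ)) = 1 := by
    rw [← mul_pow]; simp
  have h4 : ((-1 : ℝ) ^ (k - (j:ℕ))) ≠ 0 := by
    intro h; rw [h] at h3; simp at h3
  rw [zsmul_eq_mul]
  simp only [smul_eq_mul, mul_one]
  push_cast
  rw [← hC, ← mul_div_assoc, eq_div_iff (by
    exact mul_ne_zero (pow_ne_zero _ hh) (mul_ne_zero (mul_ne_zero h4 h1) h2))]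
  linear_combination ((k.choose j : ℝ) * f (x + ((i : ℝ) + ((j:ℕ) : ℝ)) * h) * h ^ k *
    ((j:ℕ).factorial : ℝ) * ((k - (j:ℕ)).factorial : ℝ)) * h3

/-- Bernstein polynomials of `t ↦ f (x + t (y - x))` inherit monotonicity of order `k`. -/
lemma bern_sign (f : ℝ → ℝ) (I : Set ℝ) (hI : I.OrdConnected) (x y : ℝ) (hx : x ∈ I) (hy : y ∈ I)
    (hxy : x < y) (N k : ℕ) (hN : 0 < N) (a : ℝ)
    (h : nIncreasingOn (fun u => a * f u) I k) (t : ℝ) (ht : t ∈ Icc (0:ℝ) 1) :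
    0 ≤ a * ((Polynomial.derivative)^[k]
      (bern N (fun i => f (x + i * ((y - x) / N))))).eval t := by
  have hpos : 0 < (y - x) / N := div_pos (sub_pos.2 hxy) (by exact_mod_cast hN)
  have e : bern N (fun i => a * f (x + i * ((y - x) / N))) =
      Polynomial.C a * bern N (fun i => f (x + i * ((y - x) / N))) := by
    unfold bern
    rw [Finset.mul_sum]
    exact Finset.sum_congr rfl fun i _ => by rw [Polynomial.C_mul, mul_assoc]
  have := bern_deriv_nonneg k N (fun i => a * f (x + i * ((y - x) / N))) ?_ t ht
  · rwa [e, Polynomial.iterate_derivative_C_mul, Polynomial.eval_C_mul] at this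
  intro i hi
  rw [fwdDiff_eq_divDiff (fun u => a * f u) x _ hpos.ne']
  refine mul_nonneg (by positivity) (h _ ?_ ?_)
  · intro j l hjl
    have h1 := mul_right_cancel₀ hpos.ne' (add_left_cancel hjl)
    have h2 : i + (j:ℕ) = i + (l:ℕ) := by exact_mod_cast h1
    exact Fin.ext (by omega)
  · intro j
    refine hI.out hx hy ⟨?_, ?_⟩
    · have : 0 ≤ ((i + j : ℕ) : ℝ) * ((y - x) / N) := by positivity
      linarith
    · have h1 : ((i + j : ℕ) : ℝ) ≤ N := by
        exact_mod_cast (by omega : i + (j:ℕ) ≤ N)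
      have h2 := mul_le_mul_of_nonneg_right h1 hpos.le
      have h3 : (N : ℝ) * ((y - x) / N) = y - x := by
        field_simp
      linarith

lemma poly_iteratedDeriv (q : Polynomial ℝ) (k : ℕ) :
    iteratedDeriv k (fun u => q.eval u) = fun u => (Polynomial.derivative^[k] q).eval u := by
  induction k with
  | zero => simp
  | succ k ih =>
    rw [iteratedDeriv_succ, ih, Function.iterate_succ_apply']
    ext u
    exact Polynomial.deriv _

lemma poly_taylor (q : Polynomial ℝ) (r : ℕ) (t : ℝ) (ht : t ∈ Icc (0:ℝ) 1) :
    q.eval t = (∑ k ∈ Finset.range (r + 1),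
        ((Polynomial.derivative^[k] q).eval 1 / (k.factorial : ℝ)) * (t - 1) ^ k) -
      ∫ s in Ioo (0:ℝ) 1, ((Polynomial.derivative^[r + 1] q).eval s / (r.factorial : ℝ)) *
        (if t < s then (t - s) ^ r else 0) := by
  rcases ht.2.eq_or_lt with rfl | hlt
  · have h1 : ∫ s in Ioo (0:ℝ) 1, ((Polynomial.derivative^[r + 1] q).eval s / (r.factorial : ℝ)) *
        (if (1:ℝ) < s then (1 - s) ^ r else 0) = 0 := by
      rw [setIntegral_congr_fun (g := fun _ => (0:ℝ)) measurableSet_Ioo]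
      · simp
      · intro s hs
        have : ¬ (1:ℝ) < s := not_lt.2 hs.2.le
        simp [this]
    rw [h1, Finset.sum_range_succ']
    simp
  · have hq : ContDiff ℝ (r + 1 : ℕ) (fun u => q.eval u) := by
      simpa using (Polynomial.contDiff_aeval (𝕜 := ℝ) q _)
    have hu : UniqueDiffOn ℝ (uIcc 1 t) := uniqueDiffOn_uIcc hlt.ne'
    have hT := taylor_integral_remainder (f := fun u => q.eval u) (x := t) (x₀ := 1) (n := r)
      hq.contDiffOn
    have hD : ∀ k ≤ r + 1, ∀ s ∈ uIcc 1 t, iteratedDerivWithin k (fun u => q.eval u) (uIcc 1 t) s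
        = (Polynomial.derivative^[k] q).eval s := by
      intro k hk s hs
      rw [iteratedDerivWithin_eq_iteratedDeriv hu
        ((hq.of_le (by exact_mod_cast hk)).contDiffAt) hs, poly_iteratedDeriv]
    rw [taylor_within_apply, sub_eq_iff_eq_add] at hT
    rw [hT, add_comm, sub_eq_add_neg]
    congr 1
    · refine Finset.sum_congr rfl fun k hk => ?_
      rw [hD k (by have := Finset.mem_range.1 hk; omega) 1 left_mem_uIcc, smul_eq_mul]
      ring
    · rw [intervalIntegral.integral_symm, intervalIntegral.integral_of_le hlt.le,
        integral_Ioc_eq_integral_Ioo]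
      congr 1
      have e : Ioo (0:ℝ) 1 ∩ Ioo t 1 = Ioo t 1 := by
        ext s; simp only [mem_inter_iff, mem_Ioo]; constructor
        · exact fun h => h.2
        · exact fun h => ⟨⟨lt_of_le_of_lt ht.1 h.1, h.2⟩, h⟩
      have e2 : ∀ s ∈ Ioo (0:ℝ) 1, ((Polynomial.derivative^[r + 1] q).eval s / (r.factorial : ℝ)) *
        (if t < s then (t - s) ^ r else 0) = (Ioo t 1).indicator (fun s =>
          ((Polynomial.derivative^[r + 1] q).eval s / (r.factorial : ℝ)) * (t - s) ^ r) s := by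
        intro s hs
        by_cases h : t < s
        · rw [indicator_of_mem (show s ∈ Ioo t 1 from ⟨h, hs.2⟩), if_pos h]
        · rw [indicator_of_notMem (fun h' => h h'.1), if_neg h, mul_zero]
      rw [setIntegral_congr_fun measurableSet_Ioo e2, setIntegral_indicator measurableSet_Ioo, e]
      refine setIntegral_congr_fun measurableSet_Ioo fun s hs => ?_
      rw [hD (r + 1) le_rfl s (by
        rw [uIcc_of_ge hlt.le]; exact Ioo_subset_Icc_self hs), smul_eq_mul]
      ring

lemma poly_integral (P : Measure ℝ) [IsFiniteMeasure P] (q : Polynomial ℝ) (r : ℕ) :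
    IntegrableOn (fun s => ((Polynomial.derivative^[r + 1] q).eval s / (r.factorial : ℝ)) *
      ∫ t in Ico 0 s, (t - s) ^ r ∂P) (Ioo 0 1) ∧
    ∫ t in Icc (0:ℝ) 1, q.eval t ∂P = (∑ k ∈ Finset.range (r + 1),
        ((Polynomial.derivative^[k] q).eval 1 / (k.factorial : ℝ)) *
          ∫ t in Icc (0:ℝ) 1, (t - 1) ^ k ∂P) -
      ∫ s in Ioo (0:ℝ) 1, ((Polynomial.derivative^[r + 1] q).eval s / (r.factorial : ℝ)) *
        ∫ t in Ico 0 s, (t - s) ^ r ∂P := by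
  set D : ℝ → ℝ := fun s => (Polynomial.derivative^[r + 1] q).eval s / (r.factorial : ℝ) with hD
  have hDc : Continuous D := by
    have := (Polynomial.derivative^[r + 1] q).continuous
    exact this.div_const _
  let K : ℝ → ℝ → ℝ := fun t s => D s * (if t < s then (t - s) ^ r else 0)
  have hK : Integrable (Function.uncurry K) ((P.restrict (Icc 0 1)).prod (volume.restrict (Ioo 0 1))) := by
    rw [Measure.prod_restrict]
    have hc : Continuous (fun p : ℝ × ℝ => D p.2 * (p.1 - p.2) ^ r) := by fun_prop
    have h1 : IntegrableOn (fun p : ℝ × ℝ => D p.2 * (p.1 - p.2) ^ r) (Icc (0:ℝ) 1 ×ˢ Icc (0:ℝ) 1)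
        (P.prod volume) := hc.continuousOn.integrableOn_compact (isCompact_Icc.prod isCompact_Icc)
    have h2 := (h1.mono_set (prod_mono_right (s := Icc (0:ℝ) 1) (Ioo_subset_Icc_self (a := (0:ℝ)) (b := 1))))
    have hm : MeasurableSet {p : ℝ × ℝ | p.1 < p.2} := measurableSet_lt measurable_fst measurable_snd
    have h3 := Integrable.indicator h2 hm
    refine h3.congr (Filter.Eventually.of_forall ?_)
    rintro ⟨t, s⟩
    by_cases h : t < s
    · simp [K, Function.uncurry, indicator, h]
    · simp [K, Function.uncurry, indicator, h]
  have hin : ∀ s ∈ Ioo (0:ℝ) 1, ∫ t in Icc (0:ℝ) 1, K t s ∂P = D s * ∫ t in Ico 0 s, (t - s) ^ r ∂P := by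
    intro s hs
    simp only [K]
    rw [integral_const_mul]
    congr 1
    have e : (fun t => if t < s then (t - s) ^ r else 0) = (Iio s).indicator (fun t => (t - s) ^ r) := by
      ext t; simp [indicator]
    rw [e, setIntegral_indicator measurableSet_Iio]
    congr 2
    ext t; simp only [mem_inter_iff, mem_Icc, mem_Iio, mem_Ico]
    constructor
    · exact fun h => ⟨h.1.1, h.2⟩
    · exact fun h => ⟨⟨h.1, h.2.le.trans hs.2.le⟩, h.2⟩
  constructor
  · have := hK.integral_prod_right
    refine (integrableOn_congr_fun ?_ measurableSet_Ioo).1 this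
    intro s hs
    exact hin s hs
  · rw [setIntegral_congr_fun measurableSet_Icc (fun t ht => poly_taylor q r t ht)]
    have hs : ∀ k ∈ Finset.range (r + 1), Integrable (fun t =>
        ((Polynomial.derivative^[k] q).eval 1 / (k.factorial : ℝ)) * (t - 1) ^ k)
        (P.restrict (Icc 0 1)) := by
      intro k _
      have hc : Continuous (fun t : ℝ =>
        ((Polynomial.derivative^[k] q).eval 1 / (k.factorial : ℝ)) * (t - 1) ^ k) := by fun_prop
      exact hc.continuousOn.integrableOn_compact isCompact_Icc
    have hL : Integrable (fun t => ∫ s in Ioo (0:ℝ) 1,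
        (Polynomial.derivative^[r + 1] q).eval s / (r.factorial : ℝ) *
          (if t < s then (t - s) ^ r else 0)) (P.restrict (Icc 0 1)) := hK.integral_prod_left
    rw [integral_sub (integrable_finsetSum _ hs) hL, integral_finsetSum _ hs]
    congr 1
    · exact Finset.sum_congr rfl fun k _ => integral_const_mul _ _
    · change ∫ t in Icc (0:ℝ) 1, ∫ s in Ioo (0:ℝ) 1, K t s ∂volume ∂P = _
      rw [integral_integral_swap hK]
      exact setIntegral_congr_fun measurableSet_Ioo hin

lemma poly_suff (μ : SignedMeasure ℝ) (m r : ℕ) (q : Polynomial ℝ)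
    (hq : ∀ k, m ≤ k → k ≤ r + 1 → ∀ t ∈ Icc (0:ℝ) 1,
      0 ≤ (-1 : ℝ) ^ (r + 1 - k) * (Polynomial.derivative^[k] q).eval t)
    (hm : m ≤ r + 1)
    (h1 : ∀ k < m, muK μ k 1 = 0)
    (h2 : ∀ k, m ≤ k → k < r + 1 → 0 ≤ (-1 : ℝ) ^ (r + 1 - k) * muK μ k 1)
    (h3 : ∀ τ ∈ Ico (0:ℝ) 1, muMinus μ r τ ≤ 0) :
    0 ≤ sInt μ (Icc 0 1) (fun t => q.eval t) := by
  obtain ⟨i1, e1⟩ := poly_integral μ.toJordanDecomposition.posPart q r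
  obtain ⟨i2, e2⟩ := poly_integral μ.toJordanDecomposition.negPart q r
  unfold sInt
  rw [e1, e2, sub_sub_sub_comm, ← Finset.sum_sub_distrib, ← integral_sub i1 i2]
  have hA : 0 ≤ ∑ k ∈ Finset.range (r + 1), (((Polynomial.derivative^[k] q).eval 1 / (k.factorial : ℝ)) *
          ∫ t in Icc (0:ℝ) 1, (t - 1) ^ k ∂μ.toJordanDecomposition.posPart -
          ((Polynomial.derivative^[k] q).eval 1 / (k.factorial : ℝ)) *
          ∫ t in Icc (0:ℝ) 1, (t - 1) ^ k ∂μ.toJordanDecomposition.negPart) := by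
    refine Finset.sum_nonneg fun k hk => ?_
    rw [← mul_sub]
    change 0 ≤ _ * muK μ k 1
    rcases lt_or_ge k m with h | h
    · rw [h1 k h, mul_zero]
    · have hk' := Finset.mem_range.1 hk
      have a := hq k h hk'.le 1 (right_mem_Icc.2 zero_le_one)
      have b := h2 k h hk'
      have c := mul_nonneg a b
      have hs : ((-1 : ℝ) ^ (r + 1 - k)) * (-1) ^ (r + 1 - k) = 1 := by
        rw [← mul_pow]; simp
      have e : (Polynomial.derivative^[k] q).eval 1 * muK μ k 1 =
        (-1 : ℝ) ^ (r + 1 - k) * (Polynomial.derivative^[k] q).eval 1 *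
          ((-1 : ℝ) ^ (r + 1 - k) * muK μ k 1) := by
        linear_combination (-((Polynomial.derivative^[k] q).eval 1 * muK μ k 1)) * hs
      rw [div_mul_eq_mul_div, e]
      positivity
  have hB : ∫ s in Ioo (0:ℝ) 1, (((Polynomial.derivative^[r + 1] q).eval s / (r.factorial : ℝ)) *
        ∫ t in Ico 0 s, (t - s) ^ r ∂μ.toJordanDecomposition.posPart -
        ((Polynomial.derivative^[r + 1] q).eval s / (r.factorial : ℝ)) *
        ∫ t in Ico 0 s, (t - s) ^ r ∂μ.toJordanDecomposition.negPart) ≤ 0 := by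
    refine setIntegral_nonpos measurableSet_Ioo fun s hs => ?_
    rw [← mul_sub]
    change _ * muMinus μ r s ≤ 0
    have a := hq (r + 1) hm le_rfl s (Ioo_subset_Icc_self hs)
    simp only [Nat.sub_self, pow_zero, one_mul] at a
    exact mul_nonpos_of_nonneg_of_nonpos (by positivity) (h3 s ⟨hs.1.le, hs.2⟩)
  linarith

lemma integral_tendsto (P : Measure ℝ) [IsFiniteMeasure P] (g : ℝ → ℝ) (q : ℕ → ℝ → ℝ)
    (hg : IntegrableOn g (Icc 0 1) P) (hq : ∀ N, IntegrableOn (q N) (Icc 0 1) P)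
    (h : ∀ ε > 0, ∀ᶠ N in Filter.atTop, ∀ t ∈ Icc (0:ℝ) 1, |q N t - g t| ≤ ε) :
    Filter.Tendsto (fun N => ∫ t in Icc (0:ℝ) 1, q N t ∂P) Filter.atTop
      (nhds (∫ t in Icc (0:ℝ) 1, g t ∂P)) := by
  rw [Metric.tendsto_nhds]
  intro ε hε
  set M := P.real (Icc 0 1)
  have hM : 0 ≤ M := measureReal_nonneg
  filter_upwards [h (ε / (M + 1)) (by positivity)] with N hN
  rw [Real.dist_eq, ← integral_sub (hq N) hg]
  have h1 := norm_setIntegral_le_of_norm_le_const (μ := P) (s := Icc (0:ℝ) 1)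
    (f := fun t => q N t - g t) (measure_lt_top _ _) (C := ε / (M + 1)) (fun t ht => hN t ht)
  rw [Real.norm_eq_abs] at h1
  refine lt_of_le_of_lt h1 ?_
  change ε / (M + 1) * M < ε
  rw [div_mul_eq_mul_div, div_lt_iff₀ (by positivity)]
  nlinarith

lemma suff_cont (I : Set ℝ) (hIo : IsOpen I) (hIc : I.OrdConnected) (m r : ℕ) (hmr : m ≤ r + 1)
    (μ : SignedMeasure ℝ) (f : ℝ → ℝ) (hf : ContinuousOn f I)
    (hinc : ∀ k, m ≤ k → k ≤ r + 1 → nIncreasingOn (fun u => (-1 : ℝ) ^ (r + 1 - k) * f u) I k)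
    (x y : ℝ) (hx : x ∈ I) (hy : y ∈ I) (hxy : x < y)
    (h1 : ∀ k < m, muK μ k 1 = 0)
    (h2 : ∀ k, m ≤ k → k < r + 1 → 0 ≤ (-1 : ℝ) ^ (r + 1 - k) * muK μ k 1)
    (h3 : ∀ τ ∈ Ico (0:ℝ) 1, muMinus μ r τ ≤ 0) :
    0 ≤ sInt μ (Icc 0 1) (fun t => f ((1 - t) * x + t * y)) := by
  set g : ℝ → ℝ := fun t => f ((1 - t) * x + t * y) with hg
  have hmaps : ∀ t ∈ Icc (0:ℝ) 1, (1 - t) * x + t * y ∈ I := by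
    intro t ht
    refine hIc.out hx hy ⟨?_, ?_⟩ <;> nlinarith [ht.1, ht.2]
  have hgc : ContinuousOn g (Icc 0 1) := by
    refine hf.comp (by fun_prop) hmaps
  let G : C(unitInterval, ℝ) := ⟨fun t => g t, hgc.domRestrict⟩
  let Q : ℕ → Polynomial ℝ := fun N => bern N (fun i => f (x + i * ((y - x) / N)))
  have hQG : ∀ N, 0 < N → ∀ t (ht : t ∈ Icc (0:ℝ) 1),
      (Q N).eval t = bernsteinApproximation N G ⟨t, ht⟩ := by
    intro N hN t ht
    rw [bernsteinApproximation.apply]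
    simp only [Q, bern, Polynomial.eval_finsetSum]
    rw [Finset.sum_range]
    refine Finset.sum_congr rfl fun i _ => ?_
    have hN' : (N : ℝ) ≠ 0 := by positivity
    have e : x + (i : ℕ) * ((y - x) / N) = (1 - ((i:ℕ) : ℝ) / N) * x + ((i:ℕ) : ℝ) / N * y := by
      field_simp
      try ring
    rw [Polynomial.eval_mul, Polynomial.eval_C, e, smul_eq_mul, mul_comm]
    congr 1
  have hunif : ∀ ε > 0, ∀ᶠ N in Filter.atTop, ∀ t ∈ Icc (0:ℝ) 1, |(Q N).eval t - g t| ≤ ε := by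
    intro ε hε
    have := Metric.tendsto_nhds.1 (bernsteinApproximation_uniform G) ε hε
    filter_upwards [this, Filter.eventually_gt_atTop 0] with N hN hN0 t ht
    rw [hQG N hN0 t ht]
    have h4 := (ContinuousMap.dist_apply_le_dist (f := bernsteinApproximation N G) (g := G) ⟨t, ht⟩)
    rw [Real.dist_eq] at h4
    exact h4.trans hN.le
  have hQi : ∀ (P : Measure ℝ) [IsFiniteMeasure P] N, IntegrableOn (fun t => (Q N).eval t) (Icc 0 1) P :=
    fun P _ N => (Q N).continuous.continuousOn.integrableOn_compact isCompact_Icc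
  have hlim : Filter.Tendsto (fun N => sInt μ (Icc 0 1) (fun t => (Q N).eval t)) Filter.atTop
      (nhds (sInt μ (Icc 0 1) g)) := by
    unfold sInt
    exact (integral_tendsto _ g _ (hgc.integrableOn_compact isCompact_Icc) (hQi _) hunif).sub
      (integral_tendsto _ g _ (hgc.integrableOn_compact isCompact_Icc) (hQi _) hunif)
  refine ge_of_tendsto hlim ?_
  filter_upwards [Filter.eventually_gt_atTop 0] with N hN
  refine poly_suff μ m r (Q N) ?_ hmr h1 h2 h3
  intro k hk1 hk2 t ht
  exact bern_sign f I hIc x y hx hy hxy N k hN _ (hinc k hk1 hk2) t ht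

lemma sInt_const_mul (μ : SignedMeasure ℝ) (A : Set ℝ) (c : ℝ) (f : ℝ → ℝ) :
    sInt μ A (fun t => c * f t) = c * sInt μ A f := by
  unfold sInt
  rw [integral_const_mul, integral_const_mul, mul_sub]

lemma neg_one_sub (n j : ℕ) (h : j ≤ n) : (-1 : ℝ) ^ (n - j) * (-1) ^ n = (-1) ^ j := by
  obtain ⟨d, rfl⟩ := Nat.exists_eq_add_of_le h
  have hs : ((-1 : ℝ) ^ d) * (-1) ^ d = 1 := by rw [← mul_pow]; simp
  rw [Nat.add_sub_cancel_left, pow_add]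
  linear_combination (-1 : ℝ) ^ j * hs

lemma neg_one_sub' (n j : ℕ) (h : j ≤ n) : (-1 : ℝ) ^ (n - j) = (-1) ^ j * (-1) ^ n := by
  have hs : ((-1 : ℝ) ^ n) * (-1) ^ n = 1 := by rw [← mul_pow]; simp
  rw [← neg_one_sub n j h]
  linear_combination -(-1 : ℝ) ^ (n - j) * hs

lemma nec_one (I : Set ℝ) (hIc : I.OrdConnected) (m n : ℕ) (μ : SignedMeasure ℝ)
    (H : ∀ f : ℝ → ℝ,
        (∀ k, m ≤ k → k ≤ n → nIncreasingOn (fun u => (-1 : ℝ) ^ (n - k) * f u) I k) →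
        ∀ x ∈ I, ∀ y ∈ I, x < y →
          0 ≤ sInt μ (Icc 0 1) (fun t => f ((1 - t) * x + t * y)))
    (x y : ℝ) (hx : x ∈ I) (hy : y ∈ I) (hxy : x < y) (k : ℕ) (hk : k < m) : muK μ k 1 = 0 := by
  have key : ∀ c : ℝ, 0 ≤ c * ((y - x) ^ k * muK μ k 1) := by
    intro c
    have h := H (fun u => c * (u - y) ^ k) (fun j hj _ => by
      have := pow_nInc_zero (I := I) y hIc k j (by omega) ((-1) ^ (n - j) * c)
      simpa only [mul_assoc] using this) x hx y hy hxy
    have e : (fun t : ℝ => c * ((1 - t) * x + t * y - y) ^ k) =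
        fun t => c * ((y - x) ^ k * (t - 1) ^ k) := by
      ext t; rw [← mul_pow]; congr 2; ring
    simp only [e] at h
    rw [sInt_const_mul, sInt_const_mul] at h
    exact h
  have a := key 1
  have b := key (-1)
  have c : (y - x) ^ k * muK μ k 1 = 0 := by linarith
  have : (y - x) ^ k ≠ 0 := pow_ne_zero _ (by linarith)
  exact (mul_eq_zero.1 c).resolve_left this

lemma nec_two (I : Set ℝ) (hIo : IsOpen I) (hIc : I.OrdConnected) (hbdd : BddAbove I) (m n : ℕ)
    (μ : SignedMeasure ℝ)
    (H : ∀ f : ℝ → ℝ,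
        (∀ k, m ≤ k → k ≤ n → nIncreasingOn (fun u => (-1 : ℝ) ^ (n - k) * f u) I k) →
        ∀ x ∈ I, ∀ y ∈ I, x < y →
          0 ≤ sInt μ (Icc 0 1) (fun t => f ((1 - t) * x + t * y)))
    (x y : ℝ) (hx : x ∈ I) (hy : y ∈ I) (hxy : x < y) (k : ℕ) (hk : k < n) :
    0 ≤ (-1 : ℝ) ^ (n - k) * muK μ k 1 := by
  set s := sSup I with hs
  have hle : ∀ u ∈ I, u ≤ s := fun u hu => le_csSup hbdd hu
  obtain ⟨u, -, hu1, hu2⟩ := exists_seq_tendsto_sSup ⟨x, hx⟩ hbdd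
  have hxs : x < s := hxy.trans_le (hle y hy)
  let F : ℝ → ℝ → ℝ := fun v t => (-1 : ℝ) ^ n * (s - ((1 - t) * x + t * v)) ^ k
  have hpos : ∀ v ∈ I, x < v → 0 ≤ sInt μ (Icc 0 1) (F v) := by
    intro v hv hxv
    refine H (fun u => (-1 : ℝ) ^ n * (s - u) ^ k) (fun j hj hjn => ?_) x hx v hv hxv
    have := pow_nInc (I := I) s hIc hle k j
    simpa only [← mul_assoc, neg_one_sub n j hjn] using this
  have hcont : ∀ (P : Measure ℝ) [IsFiniteMeasure P],
      Continuous (fun v => ∫ t in Icc (0:ℝ) 1, F v t ∂P) := by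
    intro P _
    refine continuous_parametric_integral_of_continuous (by simp only [F, Function.uncurry]; fun_prop) isCompact_Icc
  have hc : Continuous (fun v => sInt μ (Icc 0 1) (F v)) := (hcont _).sub (hcont _)
  have hlim := (hc.tendsto s).comp hu1
  have h0 : 0 ≤ sInt μ (Icc 0 1) (F s) := by
    refine ge_of_tendsto hlim ?_
    filter_upwards [hu1.eventually (lt_mem_nhds hxs)] with N hN
    exact hpos _ (hu2 N) hN
  have e : F s = fun t => ((-1 : ℝ) ^ (n - k) * (s - x) ^ k) * (t - 1) ^ k := by
    ext t
    have : s - ((1 - t) * x + t * s) = (-1) * ((s - x) * (t - 1)) := by ring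
    simp only [F]
    rw [this, mul_pow, mul_pow, neg_one_sub' n k hk.le]
    ring
  rw [e, sInt_const_mul] at h0
  change 0 ≤ _ * muK μ k 1 at h0
  have hp : 0 < (s - x) ^ k := pow_pos (by linarith) _
  have h5 : 0 ≤ (s - x) ^ k * ((-1 : ℝ) ^ (n - k) * muK μ k 1) := by linarith
  exact nonneg_of_mul_nonneg_right h5 hp

lemma nec_three (I : Set ℝ) (hIc : I.OrdConnected) (m r : ℕ) (μ : SignedMeasure ℝ)
    (H : ∀ f : ℝ → ℝ,
        (∀ k, m ≤ k → k ≤ r + 1 → nIncreasingOn (fun u => (-1 : ℝ) ^ (r + 1 - k) * f u) I k) →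
        ∀ x ∈ I, ∀ y ∈ I, x < y →
          0 ≤ sInt μ (Icc 0 1) (fun t => f ((1 - t) * x + t * y)))
    (x y : ℝ) (hx : x ∈ I) (hy : y ∈ I) (hxy : x < y) (τ : ℝ) (hτ : τ ∈ Ico (0:ℝ) 1) :
    muMinus μ r τ ≤ 0 := by
  have h := H (fun u => (-1 : ℝ) ^ (r + 1) * truncPow ((1 - τ) * x + τ * y) r u) (fun j hj hjn => by
    have := truncPow_nInc (I := I) ((1 - τ) * x + τ * y) hIc r j hjn
    simpa only [← mul_assoc, neg_one_sub (r + 1) j hjn] using this) x hx y hy hxy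
  have hd : 0 < y - x := by linarith
  have e : (fun t : ℝ => (-1 : ℝ) ^ (r + 1) * truncPow ((1 - τ) * x + τ * y) r ((1 - t) * x + t * y))
      = fun t => (-(y - x) ^ r) * (Iio τ).indicator (fun t => (t - τ) ^ r) t := by
    ext t
    unfold truncPow
    have h1 : (1 - t) * x + t * y < (1 - τ) * x + τ * y ↔ t < τ := by
      constructor
      · intro h; by_contra h'; push Not at h'; nlinarith
      · intro h; nlinarith
    by_cases ht : t < τ
    · rw [if_pos (h1.2 ht), indicator_of_mem (show t ∈ Iio τ from ht)]
      have : (1 - τ) * x + τ * y - ((1 - t) * x + t * y) = (-1) * ((y - x) * (t - τ)) := by ring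
      rw [this, mul_pow, mul_pow, pow_succ]
      have hs : ((-1 : ℝ) ^ r) * (-1) ^ r = 1 := by rw [← mul_pow]; simp
      linear_combination (-(y - x) ^ r * (t - τ) ^ r) * hs
    · rw [if_neg (fun h => ht (h1.1 h)), indicator_of_notMem (show t ∉ Iio τ from ht)]
      ring
  have e2 : sInt μ (Icc 0 1) ((Iio τ).indicator (fun t => (t - τ) ^ r)) = muMinus μ r τ := by
    unfold muMinus sInt
    have : Icc (0:ℝ) 1 ∩ Iio τ = Ico 0 τ := by
      ext t; simp only [mem_inter_iff, mem_Icc, mem_Iio, mem_Ico]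
      constructor
      · exact fun h => ⟨h.1.1, h.2⟩
      · exact fun h => ⟨⟨h.1, h.2.le.trans hτ.2.le⟩, h.2⟩
    rw [setIntegral_indicator measurableSet_Iio, setIntegral_indicator measurableSet_Iio, this]
  simp only [e] at h
  rw [sInt_const_mul, e2] at h
  have hp : 0 < (y - x) ^ r := pow_pos hd _
  by_contra hc
  push Not at hc
  nlinarith [mul_pos hp hc]

/-- Initial segments are compared. -/
lemma seg_le (P N : Measure ℝ) [IsFiniteMeasure P] [IsFiniteMeasure N]
    (h0 : P (Icc 0 1) ≤ N (Icc 0 1)) (h1 : ∀ τ ∈ Ico (0:ℝ) 1, P (Ico 0 τ) ≤ N (Ico 0 τ))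
    (S : Set ℝ) (hS : S ⊆ Icc 0 1) (hd : ∀ a ∈ S, ∀ b ∈ Icc (0:ℝ) 1, b ≤ a → b ∈ S) :
    P S ≤ N S := by
  rcases S.eq_empty_or_nonempty with rfl | hne
  · simp
  have hbd : BddAbove S := ⟨1, fun a ha => (hS ha).2⟩
  have h0S : (0:ℝ) ∈ S := by
    obtain ⟨a, ha⟩ := hne
    exact hd a ha 0 (by simp) (hS ha).1
  set c := sSup S with hc
  have hc0 : 0 ≤ c := le_csSup hbd h0S
  have hc1 : c ≤ 1 := csSup_le hne fun a ha => (hS ha).2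
  have hlt : ∀ b, 0 ≤ b → b < c → b ∈ S := by
    intro b hb hbc
    obtain ⟨a, ha, hba⟩ := exists_lt_of_lt_csSup hne hbc
    exact hd a ha b ⟨hb, hbc.le.trans hc1⟩ hba.le
  have hIco : P (Ico 0 c) ≤ N (Ico 0 c) := by
    rcases hc1.lt_or_eq with h | h
    · exact h1 c ⟨hc0, h⟩
    · rw [h]
      have hU : Ico (0:ℝ) 1 = ⋃ j : ℕ, Ico (0:ℝ) (1 - 1 / ((j:ℝ) + 1)) := by
        ext t
        simp only [mem_Ico, mem_iUnion]
        constructor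
        · rintro ⟨a, b⟩
          obtain ⟨j, hj⟩ := exists_nat_one_div_lt (sub_pos.2 b)
          exact ⟨j, a, by linarith⟩
        · rintro ⟨j, a, b⟩
          have : 0 < 1 / ((j:ℝ) + 1) := by positivity
          exact ⟨a, by linarith⟩
      have hmono : Monotone (fun j : ℕ => Ico (0:ℝ) (1 - 1 / ((j:ℝ) + 1))) := by
        intro i j hij
        apply Ico_subset_Ico_right
        have := Nat.one_div_le_one_div (α := ℝ) hij
        linarith
      rw [hU]
      refine le_of_tendsto_of_tendsto' (tendsto_measure_iUnion_atTop hmono)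
        (tendsto_measure_iUnion_atTop hmono) fun j => h1 _ ⟨?_, ?_⟩
      · have : 1 / ((j:ℝ) + 1) ≤ 1 := by
          rw [div_le_one (by positivity)]; linarith [Nat.cast_nonneg (α := ℝ) j]
        linarith
      · have : 0 < 1 / ((j:ℝ) + 1) := by positivity
        linarith
  by_cases hcS : c ∈ S
  · have hSe : S = Icc 0 c := by
      ext t; exact ⟨fun h => ⟨(hS h).1, le_csSup hbd h⟩, fun h => hd c hcS t ⟨h.1, h.2.trans hc1⟩ h.2⟩
    rw [hSe]
    rcases hc1.lt_or_eq with h | h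
    · have hU : Icc (0:ℝ) c = ⋂ j : ℕ, Ico (0:ℝ) (c + (1 - c) * (1 / ((j:ℝ) + 1 + 1))) := by
        ext t
        simp only [mem_Ico, mem_iInter, mem_Icc]
        constructor
        · rintro ⟨a, b⟩ j
          have : 0 < (1 - c) * (1 / ((j:ℝ) + 1 + 1)) := mul_pos (by linarith) (by positivity)
          exact ⟨a, by linarith⟩
        · intro hj
          refine ⟨(hj 0).1, ?_⟩
          by_contra hcon
          push Not at hcon
          obtain ⟨j, hj'⟩ := exists_nat_one_div_lt (sub_pos.2 hcon)
          have h6 := (hj j).2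
          have h7 : 1 / ((j:ℝ) + 1 + 1) ≤ 1 / ((j:ℝ) + 1) :=
            one_div_le_one_div_of_le (by positivity) (by linarith)
          have h8 : 0 < 1 / ((j:ℝ) + 1 + 1) := by positivity
          nlinarith
      have hanti : Antitone (fun j : ℕ => Ico (0:ℝ) (c + (1 - c) * (1 / ((j:ℝ) + 1 + 1)))) := by
        intro i j hij
        apply Ico_subset_Ico_right
        have hij' : (i:ℝ) ≤ j := by exact_mod_cast hij
        have : 1 / ((j:ℝ) + 1 + 1) ≤ 1 / ((i:ℝ) + 1 + 1) :=
          one_div_le_one_div_of_le (by positivity) (by linarith)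
        nlinarith
      rw [hU]
      refine le_of_tendsto_of_tendsto'
        (tendsto_measure_iInter_atTop (fun j => measurableSet_Ico.nullMeasurableSet) hanti
          ⟨0, measure_ne_top _ _⟩)
        (tendsto_measure_iInter_atTop (fun j => measurableSet_Ico.nullMeasurableSet) hanti
          ⟨0, measure_ne_top _ _⟩) fun j => h1 _ ⟨?_, ?_⟩
      · have : 0 < (1 - c) * (1 / ((j:ℝ) + 1 + 1)) := mul_pos (by linarith) (by positivity)
        linarith
      · have : 1 / ((j:ℝ) + 1 + 1) < 1 := by
          rw [div_lt_one (by positivity)]; linarith [Nat.cast_nonneg (α := ℝ) j]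
        nlinarith
    · rw [h]; exact h0
  · have hSe : S = Ico 0 c := by
      ext t
      refine ⟨fun h => ⟨(hS h).1, lt_of_le_of_ne (le_csSup hbd h) ?_⟩, fun h => hlt t h.1 h.2⟩
      rintro rfl
      exact hcS h
    rw [hSe]; exact hIco

lemma suff_mono (I : Set ℝ) (hIc : I.OrdConnected)
    (μ : SignedMeasure ℝ) (f : ℝ → ℝ) (hf0 : ∀ u ∈ I, f u ≤ 0) (hf1 : MonotoneOn f I)
    (x y : ℝ) (hx : x ∈ I) (hy : y ∈ I) (hxy : x < y)
    (h2 : muK μ 0 1 ≤ 0)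
    (h3 : ∀ τ ∈ Ico (0:ℝ) 1, muMinus μ 0 τ ≤ 0) :
    0 ≤ sInt μ (Icc 0 1) (fun t => f ((1 - t) * x + t * y)) := by
  set g : ℝ → ℝ := fun t => - f ((1 - t) * x + t * y) with hg
  have hmaps : ∀ t ∈ Icc (0:ℝ) 1, (1 - t) * x + t * y ∈ I := by
    intro t ht
    refine hIc.out hx hy ⟨?_, ?_⟩ <;> nlinarith [ht.1, ht.2]
  have hg0 : ∀ t ∈ Icc (0:ℝ) 1, 0 ≤ g t := fun t ht => neg_nonneg.2 (hf0 _ (hmaps t ht))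
  have hga : AntitoneOn g (Icc 0 1) := by
    intro a ha b hb hab
    refine neg_le_neg (hf1 (hmaps a ha) (hmaps b hb) ?_)
    nlinarith
  have hgi : ∀ (Q : Measure ℝ) [IsFiniteMeasure Q], IntegrableOn g (Icc 0 1) Q :=
    fun Q _ => hga.integrableOn_isCompact isCompact_Icc
  set P := μ.toJordanDecomposition.posPart with hP
  set N := μ.toJordanDecomposition.negPart with hN
  have h0' : P (Icc 0 1) ≤ N (Icc 0 1) := by
    unfold muK sInt at h2
    simp only [pow_zero, integral_const, smul_eq_mul, mul_one, measureReal_restrict_apply MeasurableSet.univ, univ_inter] at h2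
    have h2' : P.real (Icc 0 1) ≤ N.real (Icc 0 1) := by linarith
    exact (ENNReal.toReal_le_toReal (measure_ne_top _ _) (measure_ne_top _ _)).1 h2'
  have h1' : ∀ τ ∈ Ico (0:ℝ) 1, P (Ico 0 τ) ≤ N (Ico 0 τ) := by
    intro τ hτ
    have h := h3 τ hτ
    unfold muMinus sInt at h
    simp only [pow_zero, integral_const, smul_eq_mul, mul_one, measureReal_restrict_apply MeasurableSet.univ, univ_inter] at h
    have h2' : P.real (Ico 0 τ) ≤ N.real (Ico 0 τ) := by linarith
    exact (ENNReal.toReal_le_toReal (measure_ne_top _ _) (measure_ne_top _ _)).1 h2'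
  have hnn : ∀ (Q : Measure ℝ), 0 ≤ᵐ[Q.restrict (Icc 0 1)] g := fun Q => by
    filter_upwards [ae_restrict_mem measurableSet_Icc] with t ht using hg0 t ht
  have hint : ∫ t in Icc (0:ℝ) 1, g t ∂P ≤ ∫ t in Icc (0:ℝ) 1, g t ∂N := by
    rw [integral_eq_lintegral_of_nonneg_ae (hnn P) (hgi P).aestronglyMeasurable,
      integral_eq_lintegral_of_nonneg_ae (hnn N) (hgi N).aestronglyMeasurable]
    refine ENNReal.toReal_mono ?_ ?_
    · exact ((hgi N).lintegral_lt_top).ne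
    · rw [lintegral_eq_lintegral_meas_lt _ (hnn P) (hgi P).aestronglyMeasurable.aemeasurable,
        lintegral_eq_lintegral_meas_lt _ (hnn N) (hgi N).aestronglyMeasurable.aemeasurable]
      refine lintegral_mono fun s => ?_
      rw [Measure.restrict_apply' measurableSet_Icc, Measure.restrict_apply' measurableSet_Icc]
      refine seg_le P N h0' h1' _ inter_subset_right ?_
      rintro a ⟨ha1, ha2⟩ b hb hba
      exact ⟨lt_of_lt_of_le ha1 (hga hb ha2 hba), hb⟩
  have e : (fun t : ℝ => f ((1 - t) * x + t * y)) = fun t => - g t := by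
    ext t; simp [hg]
  unfold sInt
  rw [e, integral_neg (f := g), integral_neg (f := g)]
  linarith

theorem stmt16 (I : Set ℝ) (hIo : IsOpen I) (hIc : I.OrdConnected) (hIne : I.Nonempty)
    (hbdd : BddAbove I) (m n : ℕ) (hmn : m < n) (μ : MeasureTheory.SignedMeasure ℝ) :
    (∀ f : ℝ → ℝ,
        (∀ k, m ≤ k → k ≤ n → nIncreasingOn (fun u => (-1 : ℝ) ^ (n - k) * f u) I k) →
        ∀ x ∈ I, ∀ y ∈ I, x < y →
          0 ≤ sInt μ (Icc 0 1) (fun t => f ((1 - t) * x + t * y))) ↔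
      ((∀ k < m, muK μ k 1 = 0) ∧
        (∀ k, m ≤ k → k < n → 0 ≤ (-1 : ℝ) ^ (n - k) * muK μ k 1) ∧
        ∀ τ ∈ Ico (0:ℝ) 1, muMinus μ (n - 1) τ ≤ 0) := by
  obtain ⟨r, rfl⟩ : ∃ r, n = r + 1 := ⟨n - 1, by omega⟩
  constructor
  · intro H
    obtain ⟨x, hx⟩ := hIne
    obtain ⟨ε, hε, hb⟩ := Metric.isOpen_iff.1 hIo x hx
    have hy : x + ε / 2 ∈ I := hb (by
      rw [Metric.mem_ball, Real.dist_eq, add_sub_cancel_left, abs_of_pos (by linarith)]; linarith)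
    have hxy : x < x + ε / 2 := by linarith
    exact ⟨fun k hk => nec_one I hIc m (r + 1) μ H x _ hx hy hxy k hk,
      fun k _ hk => nec_two I hIo hIc hbdd m (r + 1) μ H x _ hx hy hxy k hk,
      fun τ hτ => nec_three I hIc m r μ H x _ hx hy hxy τ hτ⟩
  · rintro ⟨h1, h2, h3⟩ f hinc x hx y hy hxy
    rw [Nat.add_sub_cancel] at h3
    rcases r with _ | r
    · obtain rfl : m = 0 := by omega
      have a := hinc 0 le_rfl (by omega)
      have b := hinc 1 (by omega) (by omega)
      have c := h2 0 le_rfl (by omega)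
      rw [nInc_zero_iff] at a
      rw [nInc_one_iff] at b
      refine suff_mono I hIc μ f (fun u hu => ?_) (by simpa using b) x y hx hy hxy ?_ h3
      · have := a u hu
        simp at this
        exact this
      · simp at c
        exact c
    · have hc : ContinuousOn f I := by
        have := hinc (r + 2) (by omega) le_rfl
        refine nInc_continuousOn r f I hIo hIc ?_
        simpa using this
      exact suff_cont I hIo hIc m (r + 1) (by omega) μ f hc hinc x y hx hy hxy h1 h2 h3
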